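/- Let n ≥ 1, k ≥ 1 and d > 1. If ℋ ∈ Λ_d(n,k), ℋ′ ∈ Λ_d(n−1,k) and ℋ″ ∈ Λ_{d−1}(n−1,k), then the number of regions of ℋ equals the number of regions of ℋ′ plus k times the number of regions of ℋ″; i.e. r_d(n,k) = r_d(n−1,k) + k·r_{d−1}(n−1,k), where r_d(n,k) denotes the common number of regions of arrangements in Λ_d(n,k). -/

import Mathlib

noncomputable section

/-- `S` is (the carrier of) an affine subspace of dimension `m` in `ℝ^d`. -/
def IsAffineOfDim (d m : ℕ) (S : Set (EuclideanSpace ℝ (Fin d))) : Prop :=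
  ∃ A : AffineSubspace ℝ (EuclideanSpace ℝ (Fin d)),
    (A : Set (EuclideanSpace ℝ (Fin d))) = S ∧ S.Nonempty ∧ Module.finrank ℝ A.direction = m

/-- A family of hyperplanes `H i ⊆ ℝ^d`, grouped by `g : ι → Fin n` into `n` groups of
prescribed sizes `k l`, is in *general position modulo parallel hyperplanes*:
within each group the hyperplanes are parallel and pairwise distinct, and any selection of
hyperplanes from pairwise distinct groups is in general position. -/
def IsGPPH {ι : Type} [Fintype ι] (d n : ℕ) (g : ι → Fin n) (k : Fin n → ℕ)
    (H : ι → Set (EuclideanSpace ℝ (Fin d))) : Prop :=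
  (∀ l : Fin n, (Finset.univ.filter fun i => g i = l).card = k l) ∧
  (∀ l : Fin n, ∃ w : EuclideanSpace ℝ (Fin d), w ≠ 0 ∧
    ∀ i, g i = l → ∃ c : ℝ, H i = {x | (∑ t, w t * x t) = c}) ∧
  (∀ i i' : ι, i ≠ i' → g i = g i' → H i ≠ H i') ∧
  (∀ S : Finset ι, Set.InjOn g S →
    (S.card ≤ d → IsAffineOfDim d (d - S.card) (⋂ i ∈ S, H i)) ∧
    (d < S.card → (⋂ i ∈ S, H i) = ∅))

/-- The regions of an arrangement whose union is `A`: the connected components of `Aᶜ`. -/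
def regionsOf {d : ℕ} (A : Set (EuclideanSpace ℝ (Fin d))) :
    Set (Set (EuclideanSpace ℝ (Fin d))) :=
  {C | ∃ x ∈ Aᶜ, C = connectedComponentIn Aᶜ x}

/-- The number of regions of an arrangement whose union is `A`. -/
def numRegions {d : ℕ} (A : Set (EuclideanSpace ℝ (Fin d))) : ℕ :=
  (regionsOf A).ncard

/-!
Give each hyperplane an affine equation `f i = 0`; the regions are then the cells cut out by the
realizable choices of strict signs for the `f i`. If every hyperplane cuts properly each flat it
meets, then adding a hyperplane creates one new cell for every cell of the arrangement induced on
that hyperplane. The number of sets of hyperplanes with a common point obeys the same recursion, so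
the two numbers agree. In general position modulo parallels, a set of hyperplanes has a common point
iff it has at most `d` members and contains at most one from each parallel class; there are
`∑ j ≤ d, e_j(k₁, …, k_n)` such sets, `e_j` being the elementary symmetric polynomials, and these
sums satisfy the recursion.
-/

namespace HyperplaneArrangement

section Cells

open Finset AffineMap
open scoped Topology

variable {ι E : Type*} [AddCommGroup E] [Module ℝ E] {f : ι → E →ᵃ[ℝ] ℝ}
  {s U σ : Finset ι} {i : ι} {x y : E}

/-- The flat cut out by the hyperplanes `f i = 0` for `i ∈ U`; it may be empty. -/
def flat (f : ι → E →ᵃ[ℝ] ℝ) (U : Finset ι) : Set E :=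
  ⋂ i ∈ U, {x | f i x = 0}

/-- The open cell of the arrangement `(f i = 0)_{i ∈ s}` on which `f i` is positive for `i ∈ σ` and
negative for the other `i ∈ s`; it may be empty. -/
def cell (f : ι → E →ᵃ[ℝ] ℝ) (s σ : Finset ι) : Set E :=
  {x | ∀ i ∈ s, (i ∈ σ → 0 < f i x) ∧ (i ∉ σ → f i x < 0)}

/-- Every hyperplane cuts properly each flat it meets, so that any `m` hyperplanes with a common
point meet in codimension `m`. -/
def IsTransverse [DecidableEq ι] (f : ι → E →ᵃ[ℝ] ℝ) : Prop :=
  ∀ ⦃U : Finset ι⦄ ⦃i : ι⦄, i ∉ U → (flat f (insert i U)).Nonempty → ∃ y ∈ flat f U, f i y ≠ 0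

open Classical in
/-- The sign patterns realized on the flat of `U` by the hyperplanes of `s`, each encoded by its set
of positive indices. -/
def signPatterns (f : ι → E →ᵃ[ℝ] ℝ) (s U : Finset ι) : Finset (Finset ι) :=
  {σ ∈ s.powerset | (flat f U ∩ cell f s σ).Nonempty}

open Classical in
/-- The subsets of `s` whose hyperplanes have a common point on the flat of `U`. -/
def centralSubsets (f : ι → E →ᵃ[ℝ] ℝ) (s U : Finset ι) : Finset (Finset ι) :=
  {T ∈ s.powerset | (flat f T ∩ flat f U).Nonempty}

theorem mem_flat : x ∈ flat f U ↔ ∀ i ∈ U, f i x = 0 := by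
  simp [flat]

theorem flat_eq_iInter {H : ι → Set E} (hf : ∀ i, H i = {x | f i x = 0}) (U : Finset ι) :
    flat f U = ⋂ i ∈ U, H i := by
  simp only [flat, hf]

theorem flat_empty : flat f ∅ = Set.univ := by
  simp [flat]

theorem flat_insert [DecidableEq ι] : flat f (insert i U) = {x | f i x = 0} ∩ flat f U := by
  simp [flat, Set.iInter_iInter_eq_or_left]

theorem mem_signPatterns :
    σ ∈ signPatterns f s U ↔ σ ⊆ s ∧ (flat f U ∩ cell f s σ).Nonempty := by
  simp [signPatterns]

theorem mem_centralSubsets :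
    σ ∈ centralSubsets f s U ↔ σ ⊆ s ∧ (flat f σ ∩ flat f U).Nonempty := by
  simp [centralSubsets]

theorem cell_insert_of_notMem [DecidableEq ι] (hσ : i ∉ σ) :
    cell f (insert i s) σ = {x | f i x < 0} ∩ cell f s σ := by
  ext x
  simp [cell, hσ]

theorem cell_insert_insert [DecidableEq ι] (hs : i ∉ s) :
    cell f (insert i s) (insert i σ) = {x | 0 < f i x} ∩ cell f s σ := by
  ext x
  have hne : ∀ j ∈ s, j ≠ i := fun j hj => ne_of_mem_of_not_mem hj hs
  simp +contextual [cell, hne]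

theorem convex_flat : Convex ℝ (flat f U) :=
  convex_iInter₂ fun i _ => (convex_singleton 0).affine_preimage (f i)

theorem convex_cell : Convex ℝ (cell f s σ) := by
  have hcell : cell f s σ =
      ⋂ i ∈ s, (⋂ _ : i ∈ σ, f i ⁻¹' Set.Ioi 0) ∩ ⋂ _ : i ∉ σ, f i ⁻¹' Set.Iio 0 := by
    ext x
    simp [cell]
  rw [hcell]
  exact convex_iInter₂ fun i _ =>
    (convex_iInter fun _ => (convex_Ioi 0).affine_preimage (f i)).inter
      (convex_iInter fun _ => (convex_Iio 0).affine_preimage (f i))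

theorem lineMap_mem_flat (hx : x ∈ flat f U) (hy : y ∈ flat f U) (t : ℝ) :
    lineMap x y t ∈ flat f U := by
  rw [mem_flat] at hx hy ⊢
  intro i hi
  rw [apply_lineMap, hx i hi, hy i hi, lineMap_same_apply]

theorem eventually_lineMap_mem_cell (hx : x ∈ cell f s σ) (y : E) :
    ∀ᶠ t : ℝ in 𝓝 0, lineMap x y t ∈ cell f s σ := by
  refine (Finset.eventually_all s).2 fun i hi => ?_
  have htendsto : Filter.Tendsto (fun t : ℝ => f i (lineMap x y t)) (𝓝 0) (𝓝 (f i x)) := by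
    simp only [apply_lineMap]
    simpa using (lineMap_continuous (R := ℝ) (p := f i x) (q := f i y)).tendsto 0
  by_cases hiσ : i ∈ σ
  · simpa [hiσ] using htendsto.eventually_const_lt ((hx i hi).1 hiσ)
  · simpa [hiσ] using htendsto.eventually_lt_const ((hx i hi).2 hiσ)

theorem exists_neg_and_exists_pos_of_eq_zero (hx : x ∈ flat f U ∩ cell f s σ) (hxi : f i x = 0)
    (hy : y ∈ flat f U) (hyi : f i y ≠ 0) :
    (∃ z ∈ flat f U ∩ cell f s σ, f i z < 0) ∧ ∃ z ∈ flat f U ∩ cell f s σ, 0 < f i z := by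
  -- Rescale so that `t` is the value of `f i` at the parameter `t` of the line through `x` and `w`.
  let w := lineMap x y (f i y)⁻¹
  have hw : w ∈ flat f U := lineMap_mem_flat hx.1 hy _
  have hvalue (t : ℝ) : f i (lineMap x w t) = t := by
    simp only [w, apply_lineMap, hxi]
    simp [lineMap_apply, hyi]
  have hcell := eventually_lineMap_mem_cell hx.2 w
  obtain ⟨t₁, ht₁, hneg⟩ := (hcell.and_frequently (frequently_lt_nhds 0)).exists
  obtain ⟨t₂, ht₂, hpos⟩ := (hcell.and_frequently (frequently_gt_nhds 0)).exists
  exact ⟨⟨_, ⟨lineMap_mem_flat hx.1 hw t₁, ht₁⟩, by rwa [hvalue]⟩,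
    ⟨_, ⟨lineMap_mem_flat hx.1 hw t₂, ht₂⟩, by rwa [hvalue]⟩⟩

theorem IsTransverse.exists_eq_zero_iff [DecidableEq ι] (hf : IsTransverse f) (hU : i ∉ U) :
    (∃ x ∈ flat f U ∩ cell f s σ, f i x = 0) ↔
      (∃ x ∈ flat f U ∩ cell f s σ, 0 < f i x) ∧ ∃ x ∈ flat f U ∩ cell f s σ, f i x < 0 := by
  constructor
  · rintro ⟨x, hx, hxi⟩
    obtain ⟨y, hy, hyi⟩ := hf hU ⟨x, by rw [flat_insert]; exact ⟨hxi, hx.1⟩⟩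
    exact (exists_neg_and_exists_pos_of_eq_zero hx hxi hy hyi).symm
  · rintro ⟨⟨x, hx, hpos⟩, ⟨y, hy, hneg⟩⟩
    have himage : (f i '' (flat f U ∩ cell f s σ)).OrdConnected :=
      ((convex_flat.inter convex_cell).affine_image (f i)).ordConnected
    exact himage.out ⟨y, hy, rfl⟩ ⟨x, hx, rfl⟩ ⟨hneg.le, hpos.le⟩

theorem IsTransverse.flat_inter_cell_nonempty_iff [DecidableEq ι] (hf : IsTransverse f)
    (hU : i ∉ U) :
    (flat f U ∩ cell f s σ).Nonempty ↔
      (∃ x ∈ flat f U ∩ cell f s σ, 0 < f i x) ∨ ∃ x ∈ flat f U ∩ cell f s σ, f i x < 0 := by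
  constructor
  · rintro ⟨x, hx⟩
    rcases lt_trichotomy (f i x) 0 with hneg | hzero | hpos
    · exact .inr ⟨x, hx, hneg⟩
    · exact .inl ((hf.exists_eq_zero_iff hU).1 ⟨x, hx, hzero⟩).1
    · exact .inl ⟨x, hx, hpos⟩
  · rintro (⟨x, hx, -⟩ | ⟨x, hx, -⟩) <;> exact ⟨x, hx⟩

theorem mem_memberSubfamily_signPatterns [DecidableEq ι] (hs : i ∉ s) :
    σ ∈ (signPatterns f (insert i s) U).memberSubfamily i ↔
      σ ⊆ s ∧ ∃ x ∈ flat f U ∩ cell f s σ, 0 < f i x := by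
  have hnonempty : (flat f U ∩ cell f (insert i s) (insert i σ)).Nonempty ↔
      ∃ x ∈ flat f U ∩ cell f s σ, 0 < f i x := by
    rw [cell_insert_insert hs, Set.inter_left_comm, Set.inter_comm]
    rfl
  rw [mem_memberSubfamily, mem_signPatterns, hnonempty]
  grind [insert_subset_insert_iff]

theorem mem_nonMemberSubfamily_signPatterns [DecidableEq ι] (hs : i ∉ s) :
    σ ∈ (signPatterns f (insert i s) U).nonMemberSubfamily i ↔
      σ ⊆ s ∧ ∃ x ∈ flat f U ∩ cell f s σ, f i x < 0 := by
  have hnonempty (hσ : i ∉ σ) : (flat f U ∩ cell f (insert i s) σ).Nonempty ↔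
      ∃ x ∈ flat f U ∩ cell f s σ, f i x < 0 := by
    rw [cell_insert_of_notMem hσ, Set.inter_left_comm, Set.inter_comm]
    rfl
  rw [mem_nonMemberSubfamily, mem_signPatterns]
  grind

theorem IsTransverse.card_signPatterns_insert [DecidableEq ι] (hf : IsTransverse f) (hs : i ∉ s)
    (hU : i ∉ U) :
    #(signPatterns f (insert i s) U) =
      #(signPatterns f s U) + #(signPatterns f s (insert i U)) := by
  have hunion : (signPatterns f (insert i s) U).memberSubfamily i ∪
      (signPatterns f (insert i s) U).nonMemberSubfamily i = signPatterns f s U := by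
    ext σ
    rw [mem_union, mem_memberSubfamily_signPatterns hs, mem_nonMemberSubfamily_signPatterns hs,
      mem_signPatterns, hf.flat_inter_cell_nonempty_iff hU, and_or_left]
  have hinter : (signPatterns f (insert i s) U).memberSubfamily i ∩
      (signPatterns f (insert i s) U).nonMemberSubfamily i = signPatterns f s (insert i U) := by
    ext σ
    rw [mem_inter, mem_memberSubfamily_signPatterns hs, mem_nonMemberSubfamily_signPatterns hs,
      mem_signPatterns, ← and_and_left, ← hf.exists_eq_zero_iff hU, flat_insert, Set.inter_assoc,
      Set.inter_comm _ (flat f U ∩ cell f s σ)]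
    rfl
  rw [← card_memberSubfamily_add_card_nonMemberSubfamily i, ← card_union_add_card_inter, hunion,
    hinter]

theorem card_centralSubsets_insert [DecidableEq ι] (hs : i ∉ s) :
    #(centralSubsets f (insert i s) U) =
      #(centralSubsets f s U) + #(centralSubsets f s (insert i U)) := by
  have hmember : (centralSubsets f (insert i s) U).memberSubfamily i =
      centralSubsets f s (insert i U) := by
    ext T
    have hflat : flat f (insert i T) ∩ flat f U = flat f T ∩ flat f (insert i U) := by
      rw [flat_insert, flat_insert, Set.inter_left_comm, Set.inter_assoc]
    rw [mem_memberSubfamily, mem_centralSubsets, mem_centralSubsets, hflat]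
    grind [insert_subset_insert_iff]
  have hnonMember : (centralSubsets f (insert i s) U).nonMemberSubfamily i =
      centralSubsets f s U := by
    ext T
    rw [mem_nonMemberSubfamily, mem_centralSubsets, mem_centralSubsets]
    grind
  rw [← card_memberSubfamily_add_card_nonMemberSubfamily i, hmember, hnonMember, add_comm]

theorem IsTransverse.card_signPatterns [DecidableEq ι] (hf : IsTransverse f) (hsU : Disjoint s U) :
    #(signPatterns f s U) = #(centralSubsets f s U) := by
  induction s using Finset.induction_on generalizing U with
  | empty =>
    congr 1
    ext σ
    have hcell : cell f ∅ σ = Set.univ := by simp [cell]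
    rw [mem_signPatterns, mem_centralSubsets, subset_empty, hcell]
    refine and_congr_right ?_
    rintro rfl
    rw [flat_empty, Set.inter_comm]
  | insert i s hs ih =>
    obtain ⟨hU, hsU⟩ := disjoint_insert_left.1 hsU
    rw [hf.card_signPatterns_insert hs hU, card_centralSubsets_insert hs, ih hsU,
      ih (disjoint_insert_right.2 ⟨hs, hsU⟩)]

end Cells

section Regions

variable {ι E : Type*} [Fintype ι] [AddCommGroup E] [Module ℝ E] {f : ι → E →ᵃ[ℝ] ℝ}
  {σ : Finset ι} {x : E}

theorem cell_univ_subset_compl : cell f Finset.univ σ ⊆ (⋃ i, {x | f i x = 0})ᶜ := by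
  intro x hx
  simp only [Set.mem_compl_iff, Set.mem_iUnion, Set.mem_ofPred_eq, not_exists]
  intro i
  by_cases hi : i ∈ σ
  · exact ((hx i (Finset.mem_univ i)).1 hi).ne'
  · exact ((hx i (Finset.mem_univ i)).2 hi).ne

theorem exists_mem_cell_univ (hx : x ∈ (⋃ i, {x | f i x = 0})ᶜ) :
    ∃ σ, x ∈ cell f Finset.univ σ := by
  classical
  simp only [Set.mem_compl_iff, Set.mem_iUnion, Set.mem_ofPred_eq, not_exists] at hx
  refine ⟨Finset.univ.filter fun i => 0 < f i x, fun i _ => ?_⟩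
  simpa using fun hi => lt_of_le_of_ne hi (hx i)

theorem injOn_cell_univ : Set.InjOn (cell f Finset.univ) {σ | (cell f Finset.univ σ).Nonempty} := by
  have mem_iff {σ : Finset ι} {x : E} (hx : x ∈ cell f Finset.univ σ) (i : ι) :
      i ∈ σ ↔ 0 < f i x := by
    obtain ⟨hpos, hneg⟩ := hx i (Finset.mem_univ i)
    exact ⟨hpos, fun hi => by_contra fun hiσ => (hneg hiσ).not_gt hi⟩
  rintro σ ⟨x, hx⟩ τ - hστ
  ext i
  rw [mem_iff hx, mem_iff (hστ ▸ hx)]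

theorem connectedComponentIn_eq_cell_univ [TopologicalSpace E] [ContinuousAdd E]
    [ContinuousSMul ℝ E] (hf : ∀ i, Continuous (f i)) (hx : x ∈ cell f Finset.univ σ) :
    connectedComponentIn (⋃ i, {x | f i x = 0})ᶜ x = cell f Finset.univ σ := by
  apply Set.Subset.antisymm _
    (convex_cell.isPreconnected.subset_connectedComponentIn hx cell_univ_subset_compl)
  intro y hy i hi
  have hcomp := connectedComponentIn_subset (⋃ i, {x | f i x = 0})ᶜ x
  have hconn : IsPreconnected (connectedComponentIn (⋃ i, {x | f i x = 0})ᶜ x) :=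
    isPreconnected_connectedComponentIn
  have hxmem := mem_connectedComponentIn (cell_univ_subset_compl hx)
  have hzero : ∀ z ∈ connectedComponentIn (⋃ i, {x | f i x = 0})ᶜ x, f i z ≠ 0 :=
    fun z hz hz0 => hcomp hz (Set.mem_iUnion.2 ⟨i, hz0⟩)
  constructor
  · intro hiσ
    by_contra! hle
    obtain ⟨z, hz, hz0⟩ := hconn.intermediate_value hy hxmem (hf i).continuousOn
      ⟨hle, ((hx i hi).1 hiσ).le⟩
    exact hzero z hz hz0
  · intro hiσ
    by_contra! hge
    obtain ⟨z, hz, hz0⟩ := hconn.intermediate_value hxmem hy (hf i).continuousOn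
      ⟨((hx i hi).2 hiσ).le, hge⟩
    exact hzero z hz hz0

theorem numRegions_eq_card_signPatterns {d : ℕ} (f : ι → EuclideanSpace ℝ (Fin d) →ᵃ[ℝ] ℝ) :
    numRegions (⋃ i, {x | f i x = 0}) = (signPatterns f Finset.univ ∅).card := by
  have hf (i) : Continuous (f i) := (f i).continuous_of_finiteDimensional
  have hmem (σ : Finset ι) :
      σ ∈ signPatterns f Finset.univ ∅ ↔ (cell f Finset.univ σ).Nonempty := by
    simp [mem_signPatterns, flat_empty]
  have hregions : regionsOf (⋃ i, {x | f i x = 0}) =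
      cell f Finset.univ '' (signPatterns f Finset.univ ∅ : Set (Finset ι)) := by
    ext C
    constructor
    · rintro ⟨x, hx, rfl⟩
      obtain ⟨σ, hσ⟩ := exists_mem_cell_univ hx
      exact ⟨σ, (hmem σ).2 ⟨x, hσ⟩, (connectedComponentIn_eq_cell_univ hf hσ).symm⟩
    · rintro ⟨σ, hσ, rfl⟩
      obtain ⟨x, hx⟩ := (hmem σ).1 hσ
      exact ⟨x, cell_univ_subset_compl hx, (connectedComponentIn_eq_cell_univ hf hx).symm⟩
  rw [numRegions, hregions,
    (injOn_cell_univ.mono fun σ hσ => (hmem σ).1 hσ).ncard_image,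
    Set.ncard_coe_finset]

end Regions

end HyperplaneArrangement

section Transversals

open Finset

variable {ι κ : Type*} [Fintype ι] [DecidableEq κ]

open Classical in
theorem card_filter_injOn_image_eq (g : ι → κ) (A : Finset κ) :
    #{T : Finset ι | Set.InjOn g T ∧ T.image g = A} = ∏ l ∈ A, #{i | g i = l} := by
  have hg {p} (hp : p ∈ A.pi fun l => ({i | g i = l} : Finset ι)) (l : κ) (hl : l ∈ A) :
      g (p l hl) = l := by simpa using mem_pi.1 hp l hl
  rw [← card_pi]
  symm
  refine card_bij (fun p _ => A.attach.image fun l : A => p l l.2) ?_ ?_ ?_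
  · intro p hp
    have hinj : Set.InjOn g (A.attach.image fun l : A => p l l.2) := by
      simp only [Set.InjOn, coe_image, Set.forall_mem_image, hg hp]
      rintro l - l' - hll'
      rw [Subtype.ext hll']
    have himage : (A.attach.image fun l : A => p l l.2).image g = A := by
      simp only [image_image, Function.comp_def, hg hp, attach_image_val]
    exact mem_filter.2 ⟨mem_univ _, hinj, himage⟩
  · intro p hp q hq hpq
    funext l hl
    obtain ⟨l', -, hl'⟩ := mem_image.1 (hpq ▸ mem_image_of_mem _ (mem_attach A ⟨l, hl⟩))
    obtain rfl : l'.1 = l := by rw [← hg hq l' l'.2, hl', hg hp l hl]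
    exact hl'.symm
  · intro T hT
    obtain ⟨hinj, rfl⟩ := (mem_filter.1 hT).2
    choose p hpT hpg using fun l (hl : l ∈ T.image g) => mem_image.1 hl
    refine ⟨p, by simpa using hpg, ?_⟩
    ext i
    simp only [mem_image, mem_attach, true_and, Subtype.exists]
    constructor
    · rintro ⟨l, hl, rfl⟩
      exact hpT l _
    · intro hi
      exact ⟨g i, ⟨i, hi, rfl⟩, hinj (hpT _ _) hi (hpg _ _)⟩

open Classical in
theorem card_filter_injOn_card_le [Fintype κ] (g : ι → κ) (d : ℕ) :
    #{T : Finset ι | Set.InjOn g T ∧ #T ≤ d} =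
      ∑ j ∈ range (d + 1), (univ.val.map fun l => #{i | g i = l}).esymm j := by
  simp only [esymm_map_val, ← card_filter_injOn_image_eq]
  rw [card_eq_sum_card_fiberwise (f := card) (t := range (d + 1))
    (by simp +contextual [Set.MapsTo])]
  refine sum_congr rfl fun j hj => ?_
  rw [card_eq_sum_card_fiberwise (f := image g) (t := powersetCard j univ)
    (by intro T hT; simp_all [card_image_iff.2])]
  refine sum_congr rfl fun A hA => congr_arg card ?_
  ext T
  simp only [mem_filter, mem_univ, true_and]
  constructor
  · rintro ⟨⟨⟨hinj, -⟩, -⟩, himage⟩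
    exact ⟨hinj, himage⟩
  · rintro ⟨hinj, rfl⟩
    have hcard : #T = j := by rw [← card_image_of_injOn hinj, (mem_powersetCard.1 hA).2]
    exact ⟨⟨⟨hinj, hcard ▸ Nat.lt_succ_iff.1 (mem_range.1 hj)⟩, hcard⟩, rfl⟩

end Transversals

section Esymm

open Finset

variable {R : Type*} [CommSemiring R]

theorem multiset_esymm_cons_succ (a : R) (s : Multiset R) (j : ℕ) :
    (a ::ₘ s).esymm (j + 1) = s.esymm (j + 1) + a * s.esymm j := by
  simp [Multiset.esymm, Multiset.powersetCard_cons, Multiset.sum_map_mul_left]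

theorem sum_range_multiset_esymm_cons (a : R) (s : Multiset R) (d : ℕ) :
    ∑ j ∈ range (d + 2), (a ::ₘ s).esymm j =
      ∑ j ∈ range (d + 2), s.esymm j + a * ∑ j ∈ range (d + 1), s.esymm j := by
  have hzero (t : Multiset R) : t.esymm 0 = 1 := by simp [Multiset.esymm]
  rw [sum_range_succ', sum_range_succ' s.esymm]
  simp only [multiset_esymm_cons_succ, hzero, sum_add_distrib, mul_sum]
  ring

end Esymm

namespace IsGPPH

open HyperplaneArrangement

variable {ι : Type} [Fintype ι] {d n : ℕ} {g : ι → Fin n} {k : Fin n → ℕ}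
  {H : ι → Set (EuclideanSpace ℝ (Fin d))}

theorem exists_affineMap (h : IsGPPH d n g k H) :
    ∃ f : ι → EuclideanSpace ℝ (Fin d) →ᵃ[ℝ] ℝ, ∀ i, H i = {x | f i x = 0} := by
  choose w _ hw using h.2.1
  choose c hc using fun i => hw (g i) i rfl
  refine ⟨fun i => (innerₗ _ (w (g i))).toAffineMap - AffineMap.const ℝ _ (c i), fun i => ?_⟩
  simp [hc, PiLp.inner_apply, sub_eq_zero, mul_comm]

theorem disjoint_of_parallel (h : IsGPPH d n g k H) {i j : ι} (hij : i ≠ j) (hg : g i = g j) :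
    Disjoint (H i) (H j) := by
  obtain ⟨w, -, hw⟩ := h.2.1 (g i)
  obtain ⟨a, ha⟩ := hw i rfl
  obtain ⟨b, hb⟩ := hw j hg.symm
  have hab : a ≠ b := fun hab => h.2.2.1 i j hij hg (by rw [ha, hb, hab])
  rw [ha, hb, Set.disjoint_left]
  exact fun x hxa hxb => hab (hxa.symm.trans hxb)

theorem nonempty_iInter_iff (h : IsGPPH d n g k H) (T : Finset ι) :
    (⋂ i ∈ T, H i).Nonempty ↔ Set.InjOn g T ∧ T.card ≤ d := by
  constructor
  · rintro ⟨x, hx⟩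
    have hxH : ∀ i ∈ T, x ∈ H i := by simpa using hx
    have hinj : Set.InjOn g T := fun i hi j hj hg => by_contra fun hij =>
      Set.disjoint_left.1 (h.disjoint_of_parallel hij hg) (hxH i hi) (hxH j hj)
    refine ⟨hinj, not_lt.1 fun hlt => ?_⟩
    rwa [(h.2.2.2 T hinj).2 hlt] at hx
  · rintro ⟨hinj, hcard⟩
    obtain ⟨-, -, hnonempty, -⟩ := (h.2.2.2 T hinj).1 hcard
    exact hnonempty

theorem isTransverse [DecidableEq ι] (h : IsGPPH d n g k H)
    {f : ι → EuclideanSpace ℝ (Fin d) →ᵃ[ℝ] ℝ} (hf : ∀ i, H i = {x | f i x = 0}) :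
    IsTransverse f := by
  intro U i hi hnonempty
  rw [flat_eq_iInter hf, h.nonempty_iInter_iff] at hnonempty
  obtain ⟨hinj, hcard⟩ := hnonempty
  by_contra! hvanish
  have heq : flat f (insert i U) = flat f U := by
    rw [flat_insert, Set.inter_eq_right]
    exact hvanish
  -- These equal flats would have the different dimensions `d - (#U + 1)` and `d - #U`.
  obtain ⟨A, hA, -, hdimA⟩ := (h.2.2.2 _ hinj).1 hcard
  rw [Finset.card_insert_of_notMem hi] at hcard hdimA
  obtain ⟨B, hB, -, hdimB⟩ := (h.2.2.2 U (hinj.mono (by simp))).1 (by omega)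
  have hAB : A = B :=
    SetLike.coe_injective (by rw [hA, hB, ← flat_eq_iInter hf, ← flat_eq_iInter hf, heq])
  rw [hAB] at hdimA
  omega

theorem numRegions_eq_sum_esymm (h : IsGPPH d n g k H) :
    numRegions (⋃ i, H i) = ∑ j ∈ Finset.range (d + 1), (Finset.univ.val.map k).esymm j := by
  classical
  obtain ⟨f, hf⟩ := h.exists_affineMap
  have hcentral : centralSubsets f Finset.univ ∅ =
      Finset.univ.filter fun T : Finset ι => Set.InjOn g T ∧ T.card ≤ d := by
    ext T
    simp [mem_centralSubsets, flat_eq_iInter hf, h.nonempty_iInter_iff]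
  calc numRegions (⋃ i, H i)
    _ = (signPatterns f Finset.univ ∅).card := by
      simp only [hf, numRegions_eq_card_signPatterns]
    _ = (Finset.univ.filter fun T : Finset ι => Set.InjOn g T ∧ T.card ≤ d).card := by
      rw [(h.isTransverse hf).card_signPatterns (Finset.disjoint_empty_right _), hcentral]
    _ = ∑ j ∈ Finset.range (d + 1), (Finset.univ.val.map k).esymm j := by
      simp only [card_filter_injOn_card_le, ← h.1]

end IsGPPH

theorem numRegions_recursion_general {d n : ℕ} {k : Fin (n + 1) → ℕ} (l : Fin (n + 1))
    {ι ι' ι'' : Type} [Fintype ι] [Fintype ι'] [Fintype ι'']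
    {g : ι → Fin (n + 1)} {H : ι → Set (EuclideanSpace ℝ (Fin (d + 1)))}
    {g' : ι' → Fin n} {H' : ι' → Set (EuclideanSpace ℝ (Fin (d + 1)))}
    {g'' : ι'' → Fin n} {H'' : ι'' → Set (EuclideanSpace ℝ (Fin d))}
    (hGP : IsGPPH (d + 1) (n + 1) g k H)
    (hGP' : IsGPPH (d + 1) n g' (fun j => k (l.succAbove j)) H')
    (hGP'' : IsGPPH d n g'' (fun j => k (l.succAbove j)) H'') :
    numRegions (⋃ i, H i) = numRegions (⋃ i, H' i) + k l * numRegions (⋃ i, H'' i) := by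
  have hsizes : Finset.univ.val.map k =
      k l ::ₘ Finset.univ.val.map fun j => k (l.succAbove j) := by
    simp [Fin.univ_succAbove n l, Function.comp_def]
  rw [hGP.numRegions_eq_sum_esymm, hGP'.numRegions_eq_sum_esymm, hGP''.numRegions_eq_sum_esymm,
    hsizes, sum_range_multiset_esymm_cons]

/-- `r_d(n,k) = r_d(n−1,k) + k·r_{d−1}(n−1,k)` for `d > 1`:
if `ℋ ∈ Λ_d(n,k)`, `ℋ′ ∈ Λ_d(n−1,k)` and `ℋ″ ∈ Λ_{d−1}(n−1,k)`, then the number of regions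
of `ℋ` equals that of `ℋ′` plus `k` times that of `ℋ″`. -/
theorem numRegions_recursion {d n k : ℕ} (hd : 1 < d) (hn : 1 ≤ n) (hk : 1 ≤ k)
    {ι ι' ι'' : Type} [Fintype ι] [Fintype ι'] [Fintype ι'']
    (g : ι → Fin n) (H : ι → Set (EuclideanSpace ℝ (Fin d)))
    (g' : ι' → Fin (n - 1)) (H' : ι' → Set (EuclideanSpace ℝ (Fin d)))
    (g'' : ι'' → Fin (n - 1)) (H'' : ι'' → Set (EuclideanSpace ℝ (Fin (d - 1))))
    (hGP : IsGPPH d n g (fun _ => k) H)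
    (hGP' : IsGPPH d (n - 1) g' (fun _ => k) H')
    (hGP'' : IsGPPH (d - 1) (n - 1) g'' (fun _ => k) H'') :
    numRegions (⋃ i, H i) = numRegions (⋃ i, H' i) + k * numRegions (⋃ i, H'' i) := by
  obtain ⟨n, rfl⟩ := Nat.exists_eq_add_of_le' hn
  obtain ⟨d, rfl⟩ := Nat.exists_eq_add_of_le' hd.le
  exact numRegions_recursion_general 0 hGP hGP' hGP''

end
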